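/- Let p be a prime, let G be a finite group, let S be a Sylow p-subgroup of G, and let Q be a nontrivial normal subgroup of S. Then S·N_G(Q)' ≤ (N_G(S) ∩ N_G(Q))'·O^{p'}(N_G(Q)), and consequently N_G(S) ∩ S·N_G(Q)' ≤ N_G(S)'·(N_G(S) ∩ O^{p'}(N_G(Q))). -/

import Mathlib

open Subgroup Pointwise

/-- `O^{p'}(H)`: the subgroup generated by the elements of `H` of `p`-power order. -/
def pResidual {G : Type*} [Group G] (p : ℕ) (H : Subgroup G) : Subgroup G :=
  Subgroup.closure {g : G | g ∈ H ∧ ∃ n : ℕ, g ^ p ^ n = 1}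

open scoped commutatorElement

theorem aux_conj {G : Type*} [Group G] (p : ℕ) (N : Subgroup G) {n o : G} (hn : n ∈ N)
    (ho : o ∈ pResidual p N) : n * o * n⁻¹ ∈ pResidual p N := by
  unfold pResidual at ho ⊢
  induction ho using Subgroup.closure_induction with
  | mem x hx =>
    obtain ⟨h1, k, hk⟩ := hx
    refine Subgroup.subset_closure ⟨N.mul_mem (N.mul_mem hn h1) (N.inv_mem hn), k, ?_⟩
    rw [conj_pow, hk]; simp
  | one => simp
  | mul x y _ _ hx hy =>
    have : n * (x * y) * n⁻¹ = (n * x * n⁻¹) * (n * y * n⁻¹) := by group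
    rw [this]; exact Subgroup.mul_mem _ hx hy
  | inv x _ hx =>
    have : n * x⁻¹ * n⁻¹ = (n * x * n⁻¹)⁻¹ := by group
    rw [this]; exact Subgroup.inv_mem _ hx

theorem aux_le {G : Type*} [Group G] (p : ℕ) (N : Subgroup G) : pResidual p N ≤ N :=
  (Subgroup.closure_le _).2 fun _ h => h.1

theorem aux_pgroup {G : Type*} [Group G] (p : ℕ) (N P : Subgroup G) (hP : IsPGroup p P)
    (h : P ≤ N) : P ≤ pResidual p N := by
  intro x hx
  obtain ⟨k, hk⟩ := hP ⟨x, hx⟩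
  refine Subgroup.subset_closure ⟨h hx, k, ?_⟩
  simpa using congrArg Subtype.val hk

theorem aux_frattini {G : Type*} [Group G] [Finite G] (p : ℕ) [Fact p.Prime]
    (S : Sylow p G) (N : Subgroup G) (hSN : (S : Subgroup G) ≤ N) {n : G} (hn : n ∈ N) :
    ∃ m ∈ Subgroup.normalizer ((S : Subgroup G) : Set G) ⊓ N, ∃ o ∈ pResidual p N,
      n = m * o := by
  have h1 := aux_pgroup p N S S.isPGroup' hSN
  have h2 : ((n • S : Sylow p G) : Subgroup G) ≤ pResidual p N := by
    intro x hx
    rw [Sylow.coe_subgroup_smul, Subgroup.mem_pointwise_smul_iff_inv_smul_mem] at hx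
    have := aux_conj p N hn (h1 hx)
    simpa [MulAut.smul_def, mul_assoc] using this
  obtain ⟨o, ho⟩ := MulAction.exists_smul_eq (pResidual p N) ((n • S).subtype h2) (S.subtype h1)
  rw [Sylow.smul_subtype] at ho
  have h3 := Sylow.subtype_injective ho
  have h4 : ((o : G) * n) • S = S := by rw [mul_smul]; exact h3
  rw [Sylow.smul_eq_iff_mem_normalizer] at h4
  refine ⟨o * n, ⟨h4, N.mul_mem (aux_le p N o.2) hn⟩, n⁻¹ * (o : G)⁻¹ * n, ?_, by group⟩
  simpa using aux_conj p N (N.inv_mem hn) ((pResidual p N).inv_mem o.2)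

theorem stmt4 {G : Type*} [Group G] [Fintype G] (p : ℕ) [Fact p.Prime]
    (S : Sylow p G) (Q : Subgroup G) (hQ : Q ≠ ⊥) (hQS : Q ≤ (S : Subgroup G))
    (hQnorm : ∀ s ∈ (S : Subgroup G), ∀ q ∈ Q, s * q * s⁻¹ ∈ Q) :
    (((S : Subgroup G) : Set G) *
        ((⁅Subgroup.normalizer (Q : Set G), Subgroup.normalizer (Q : Set G)⁆ : Subgroup G) : Set G)) ⊆
      (((⁅Subgroup.normalizer ((S : Subgroup G) : Set G) ⊓ Subgroup.normalizer (Q : Set G),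
            Subgroup.normalizer ((S : Subgroup G) : Set G) ⊓ Subgroup.normalizer (Q : Set G)⁆ : Subgroup G) : Set G) *
        (pResidual p (Subgroup.normalizer (Q : Set G)) : Set G)) ∧
      ((Subgroup.normalizer ((S : Subgroup G) : Set G) : Set G) ∩
          (((S : Subgroup G) : Set G) *
            ((⁅Subgroup.normalizer (Q : Set G), Subgroup.normalizer (Q : Set G)⁆ : Subgroup G) : Set G))) ⊆
        (((⁅Subgroup.normalizer ((S : Subgroup G) : Set G), Subgroup.normalizer ((S : Subgroup G) : Set G)⁆ : Subgroup G) : Set G) *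
          ((Subgroup.normalizer ((S : Subgroup G) : Set G) ⊓ pResidual p (Subgroup.normalizer (Q : Set G)) : Subgroup G) : Set G)) := by
  set N := Subgroup.normalizer (Q : Set G) with hN
  set T := Subgroup.normalizer ((S : Subgroup G) : Set G) with hT
  set O := pResidual p N with hO
  have hSN : (S : Subgroup G) ≤ N := by
    intro s hs
    rw [hN, Subgroup.mem_normalizer_iff]
    intro q
    refine ⟨fun h => hQnorm s hs q h, fun h => ?_⟩
    have := hQnorm s⁻¹ (S.inv_mem hs) _ h
    simpa [mul_assoc] using this
  have hS := aux_pgroup p N S S.isPGroup' hSN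
  have hNO : N ≤ Subgroup.normalizer (O : Set G) := by
    intro n hn
    rw [Subgroup.mem_normalizer_iff]
    intro q
    refine ⟨fun h => aux_conj p N hn h, fun h => ?_⟩
    have := aux_conj p N (N.inv_mem hn) h
    simpa [mul_assoc] using this
  have hM : ⁅T ⊓ N, T ⊓ N⁆ ≤ N :=
    (Subgroup.commutator_mono inf_le_right inf_le_right).trans (Subgroup.commutator_le_self N)
  have hcoe := Subgroup.coe_mul_of_left_le_normalizer_right ⁅T ⊓ N, T ⊓ N⁆ O (hM.trans hNO)
  have : (O.subgroupOf N).Normal := ⟨fun a ha n => by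
    rw [Subgroup.mem_subgroupOf] at ha ⊢
    exact aux_conj p N n.2 ha⟩
  have key : ⁅N, N⁆ ≤ ⁅T ⊓ N, T ⊓ N⁆ ⊔ O := by
    rw [Subgroup.commutator_le]
    intro a ha b hb
    obtain ⟨m, hm, o, ho, rfl⟩ := aux_frattini p S N hSN ha
    obtain ⟨m', hm', o', ho', rfl⟩ := aux_frattini p S N hSN hb
    have e1 : (QuotientGroup.mk' (O.subgroupOf N)) ⟨o, aux_le p N ho⟩ = 1 :=
      (QuotientGroup.eq_one_iff _).2 (Subgroup.mem_subgroupOf.2 ho)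
    have e2 : (QuotientGroup.mk' (O.subgroupOf N)) ⟨o', aux_le p N ho'⟩ = 1 :=
      (QuotientGroup.eq_one_iff _).2 (Subgroup.mem_subgroupOf.2 ho')
    have e3 : (QuotientGroup.mk' (O.subgroupOf N))
        (⁅(⟨m, hm.2⟩ : N), (⟨m', hm'.2⟩ : N)⁆⁻¹ *
          ⁅(⟨m, hm.2⟩ : N) * ⟨o, aux_le p N ho⟩, (⟨m', hm'.2⟩ : N) * ⟨o', aux_le p N ho'⟩⁆) = 1 := by
      rw [map_mul, map_inv, map_commutatorElement, map_commutatorElement, map_mul, map_mul, e1, e2,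
        mul_one, mul_one, inv_mul_cancel]
    have e4 : ⁅m, m'⁆⁻¹ * ⁅m * o, m' * o'⁆ ∈ O :=
      Subgroup.mem_subgroupOf.1 ((QuotientGroup.eq_one_iff _).1 e3)
    have e5 := Subgroup.mul_mem_sup (Subgroup.commutator_mem_commutator hm hm') e4
    rw [mul_inv_cancel_left] at e5
    exact e5
  have first : ((S : Subgroup G) : Set G) * ((⁅N, N⁆ : Subgroup G) : Set G) ⊆
      ((⁅T ⊓ N, T ⊓ N⁆ : Subgroup G) : Set G) * (O : Set G) := by
    rw [← hcoe]
    rintro _ ⟨s, hs, t, ht, rfl⟩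
    exact Subgroup.mul_mem _ (Subgroup.mem_sup_right (hS hs)) (key ht)
  refine ⟨first, ?_⟩
  rintro x ⟨hxT, hx⟩
  obtain ⟨m, hm, o, ho, rfl⟩ := first hx
  have hm' : m ∈ ⁅T, T⁆ := Subgroup.commutator_mono inf_le_left inf_le_left hm
  refine ⟨m, hm', o, ⟨?_, ho⟩, rfl⟩
  have hmT : m ∈ T := Subgroup.commutator_le_self T hm'
  have := T.mul_mem (T.inv_mem hmT) hxT
  simpa using this
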